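/- The odd part O of ℤ[r,s] is a free module over the subring ℤ[a,b] with basis {r, s, r²s}. (This is the statement that the twisted representation module R₁[SO(4)] is a free R[G₂]-module of rank 3.) -/

import Mathlib

/-!
Spanning: the relations `r³ = (a+1)r - r²s` and `r⁴s = (b+1-a)r - (a+1)s + 4r²s` show that the
`ℤ[a,b]`-span of `r, s, r²s` is stable under multiplication by `r²`, hence also by
`rs = (a+1) - r²` and by `s² = (b+2) - r³s + 2rs - r²`. Every odd monomial is `r` or `s` times a
product of powers of `r²` and `s²`.

Independence: multiplying a relation `c₀r + c₁s + c₂r²s = 0` by `r` gives an equation of degree at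
most two for `r²` with coefficients in `ℤ[a,b]`. Put `χ(u) = u + u⁻¹`. By Weyl invariance under
`G₂`, the polynomials `a` and `b` take equal values at the three points `(r,s)` given by
`(χ(t²), χ(w²))`, `(χ(tw), χ(t³/w))` and `(χ(t/w), χ(t³w))`, while for `1 < w < t` the values of
`r²` there are distinct (`ev_eq_zero`). A quadratic with three roots vanishes, so each `cᵢ` is zero
at `(χ(t²), χ(w²))`; these points contain a product of two infinite sets, whence `cᵢ = 0`
(`eq_zero_of_ev`).
-/

/-!
Statement 10: the odd part `O` of `ℤ[r,s]` is a free module over the subring `ℤ[a,b]`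
with basis `{r, s, r²s}` (i.e. the twisted representation module `R₁[SO(4)]` is a free
`R[G₂]`-module of rank 3).
-/

noncomputable section

open MvPolynomial

/-- `ℤ[r,s]`, the representation ring of `SU(2) × SU(2)`. -/
abbrev P2 : Type := MvPolynomial (Fin 2) ℤ

/-- `r`, the first fundamental character. -/
def r : P2 := X 0

/-- `s`, the second fundamental character. -/
def s : P2 := X 1

/-- The odd part `O` of `ℤ[r,s]`: the `ℤ`-span of the monomials `r^i s^j` with `i + j`
odd; it is the twisted representation module `R₁[SO(4)]`. -/
def oddPart : Submodule ℤ P2 :=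
  Submodule.span ℤ {q | ∃ i j : ℕ, Odd (i + j) ∧ q = r ^ i * s ^ j}

/-- `a = rs + r² − 1`, the restriction to `SO(4)` of the first fundamental character
of `G₂`. -/
def a : P2 := r * s + r ^ 2 - 1

/-- `b = r³s − 2rs + r² + s² − 2`, the restriction to `SO(4)` of the second fundamental
character of `G₂`. -/
def b : P2 := r ^ 3 * s - 2 * (r * s) + r ^ 2 + s ^ 2 - 2

/-- The subring `ℤ[a,b] ⊆ ℤ[r,s]`, the image of `R[G₂]` in `R[SO(4)]`. -/
def Zab : Subalgebra ℤ P2 := Algebra.adjoin ℤ {a, b}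

/-- `f` is a `ℤ[a,b]`-linear combination of `r`, `s`, `r²s`. -/
def Spanned (f : P2) : Prop :=
  ∃ c₀ ∈ Zab, ∃ c₁ ∈ Zab, ∃ c₂ ∈ Zab, f = c₀ * r + c₁ * s + c₂ * (r ^ 2 * s)

theorem a_mem : a ∈ Zab := Algebra.subset_adjoin (by simp)

theorem b_mem : b ∈ Zab := Algebra.subset_adjoin (by simp)

theorem Spanned.add {f g : P2} (hf : Spanned f) (hg : Spanned g) : Spanned (f + g) := by
  obtain ⟨c₀, h₀, c₁, h₁, c₂, h₂, rfl⟩ := hf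
  obtain ⟨d₀, k₀, d₁, k₁, d₂, k₂, rfl⟩ := hg
  exact ⟨c₀ + d₀, add_mem h₀ k₀, c₁ + d₁, add_mem h₁ k₁, c₂ + d₂, add_mem h₂ k₂, by ring⟩

theorem Spanned.mul {z f : P2} (hz : z ∈ Zab) (hf : Spanned f) : Spanned (z * f) := by
  obtain ⟨c₀, h₀, c₁, h₁, c₂, h₂, rfl⟩ := hf
  exact ⟨z * c₀, mul_mem hz h₀, z * c₁, mul_mem hz h₁, z * c₂, mul_mem hz h₂, by ring⟩

/-- The coefficients come from `r³ = (a+1)r - r²s` and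
`r⁴s = (b+1-a)r - (a+1)s + 4r²s`. -/
theorem Spanned.r_sq_mul {f : P2} (hf : Spanned f) : Spanned (r ^ 2 * f) := by
  obtain ⟨c₀, h₀, c₁, h₁, c₂, h₂, rfl⟩ := hf
  refine ⟨c₀ * (a + 1) + c₂ * (b + 1 - a), ?_, -(c₂ * (a + 1)), ?_, c₁ - c₀ + 4 * c₂, ?_, ?_⟩
  · exact add_mem (mul_mem h₀ (add_mem a_mem (one_mem _)))
      (mul_mem h₂ (sub_mem (add_mem b_mem (one_mem _)) a_mem))
  · exact neg_mem (mul_mem h₂ (add_mem a_mem (one_mem _)))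
  · exact add_mem (sub_mem h₁ h₀) (mul_mem (ofNat_mem _ 4) h₂)
  · simp only [a, b]; ring

/-- Uses `rs = (a+1) - r²` and `s² = (b+2) - r²·(rs) + 2rs - r²`. -/
theorem Spanned.s_sq_mul {f : P2} (hf : Spanned f) : Spanned (s ^ 2 * f) := by
  have hA : a + 1 ∈ Zab := add_mem a_mem (one_mem _)
  have hn : (-1 : P2) ∈ Zab := neg_mem (one_mem _)
  have hrs : Spanned ((a + 1) * f + -1 * (r ^ 2 * f)) := (hf.mul hA).add (hf.r_sq_mul.mul hn)
  have h := (((hf.mul (add_mem b_mem (ofNat_mem _ 2))).add (hrs.r_sq_mul.mul hn)).add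
    (hrs.mul (ofNat_mem Zab 2))).add (hf.r_sq_mul.mul hn)
  convert h using 1
  simp only [a, b]; ring

theorem spanned_pow_mul {f : P2} (hf : Spanned f) (p q : ℕ) :
    Spanned ((r ^ 2) ^ p * ((s ^ 2) ^ q * f)) := by
  induction p with
  | zero =>
    induction q with
    | zero => simpa using hf
    | succ q ih =>
      have h := ih.s_sq_mul
      convert h using 1
      ring
  | succ p ih =>
    have h := ih.r_sq_mul
    convert h using 1
    ring

theorem spanned_of_mem_oddPart {f : P2} (hf : f ∈ oddPart) : Spanned f := by
  induction hf using Submodule.span_induction with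
  | mem x hx =>
    obtain ⟨i, j, hij, rfl⟩ := hx
    rcases Nat.even_or_odd' i with ⟨p, rfl | rfl⟩ <;> rcases Nat.even_or_odd' j with ⟨q, rfl | rfl⟩
    · exact absurd hij (by simp [← Nat.not_even_iff_odd, ← mul_add])
    · have h := spanned_pow_mul (f := s)
        ⟨0, zero_mem _, 1, one_mem _, 0, zero_mem _, by ring⟩ p q
      convert h using 1
      ring
    · have h := spanned_pow_mul (f := r)
        ⟨1, one_mem _, 0, zero_mem _, 0, zero_mem _, by ring⟩ p q
      convert h using 1
      ring
    · obtain ⟨k, hk⟩ := hij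
      omega
  | zero => exact ⟨0, zero_mem _, 0, zero_mem _, 0, zero_mem _, by ring⟩
  | add x y _ _ hx hy => exact hx.add hy
  | smul n x _ hx =>
    rw [zsmul_eq_mul]
    exact hx.mul (intCast_mem _ n)

/-- Evaluation `ℤ[r,s] → ℝ` at the point `r = x`, `s = y`. -/
def ev (x y : ℝ) : P2 →ₐ[ℤ] ℝ := aeval ![x, y]

@[simp] theorem ev_r (x y : ℝ) : ev x y r = x := by simp [ev, r]

@[simp] theorem ev_s (x y : ℝ) : ev x y s = y := by simp [ev, s]

theorem ev_congr {x y x' y' : ℝ} (ha : ev x y a = ev x' y' a) (hb : ev x y b = ev x' y' b)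
    {c : P2} (hc : c ∈ Zab) : ev x y c = ev x' y' c := by
  have h : Zab ≤ AlgHom.equalizer (ev x y) (ev x' y') := by
    refine Algebra.adjoin_le ?_
    rintro z (rfl | rfl)
    · exact ha
    · exact hb
  exact h hc

/-- The character value `u + u⁻¹` of the fundamental representation of `SU(2)`. -/
def chi (u : ℝ) : ℝ := u + u⁻¹

theorem chi_lt {u v : ℝ} (hu : 1 < u) (huv : u < v) : chi u < chi v := by
  have hv : 1 < v := hu.trans huv
  have h : chi v - chi u = (v - u) * (u * v - 1) / (u * v) := by
    unfold chi
    field_simp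
    ring
  have : 0 < (v - u) * (u * v - 1) / (u * v) := by
    have : 0 < u * v - 1 := by nlinarith
    have : 0 < v - u := by linarith
    positivity
  linarith

/-- A polynomial of degree at most two with three distinct roots has zero coefficients. -/
theorem quadratic_zero {p q e x y z : ℝ} (hxy : x ≠ y) (hyz : y ≠ z) (hxz : x ≠ z)
    (hx : p + q * x + e * x ^ 2 = 0) (hy : p + q * y + e * y ^ 2 = 0)
    (hz : p + q * z + e * z ^ 2 = 0) : p = 0 ∧ q = 0 ∧ e = 0 := by
  have h1 : q + e * (x + y) = 0 :=
    mul_left_cancel₀ (sub_ne_zero.2 hxy) (by linear_combination hx - hy)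
  have h2 : q + e * (y + z) = 0 :=
    mul_left_cancel₀ (sub_ne_zero.2 hyz) (by linear_combination hy - hz)
  have he : e = 0 := mul_left_cancel₀ (sub_ne_zero.2 hxz) (by linear_combination h1 - h2)
  subst he
  have hq : q = 0 := by linarith
  subst hq
  exact ⟨by linarith, rfl, rfl⟩

/-- For `1 < w < t`, the points `(χ(t²), χ(w²))`, `(χ(tw), χ(t³/w))`, `(χ(t/w), χ(t³w))` form a
Weyl group orbit: `a` and `b` take the same values on them, whereas the values of `r²` differ. -/
theorem ev_eq_zero {t w : ℝ} (hw : 1 < w) (hwt : w < t) {c₀ c₁ c₂ : P2}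
    (h₀ : c₀ ∈ Zab) (h₁ : c₁ ∈ Zab) (h₂ : c₂ ∈ Zab)
    (h : c₀ * r + c₁ * s + c₂ * (r ^ 2 * s) = 0) :
    ev (chi (t ^ 2)) (chi (w ^ 2)) c₀ = 0 ∧ ev (chi (t ^ 2)) (chi (w ^ 2)) c₁ = 0 ∧
      ev (chi (t ^ 2)) (chi (w ^ 2)) c₂ = 0 := by
  have hw0 : 0 < w := by linarith
  have ht0 : 0 < t := by linarith
  have a2 : ev (chi (t * w)) (chi (t ^ 3 / w)) a = ev (chi (t ^ 2)) (chi (w ^ 2)) a := by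
    simp only [a, map_add, map_sub, map_mul, map_pow, map_one, ev_r, ev_s, chi]
    field_simp
    ring
  have a3 : ev (chi (t / w)) (chi (t ^ 3 * w)) a = ev (chi (t ^ 2)) (chi (w ^ 2)) a := by
    simp only [a, map_add, map_sub, map_mul, map_pow, map_one, ev_r, ev_s, chi]
    field_simp
    ring
  have b2 : ev (chi (t * w)) (chi (t ^ 3 / w)) b = ev (chi (t ^ 2)) (chi (w ^ 2)) b := by
    simp only [b, map_add, map_sub, map_mul, map_pow, map_ofNat, ev_r, ev_s, chi]
    field_simp
    ring
  have b3 : ev (chi (t / w)) (chi (t ^ 3 * w)) b = ev (chi (t ^ 2)) (chi (w ^ 2)) b := by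
    simp only [b, map_add, map_sub, map_mul, map_pow, map_ofNat, ev_r, ev_s, chi]
    field_simp
    ring
  -- After multiplication by `r`, the substitution `rs = (a+1) - r²` turns the relation into a
  -- quadratic equation for `r²` over `ℤ[a,b]`.
  have key : c₁ * (a + 1) + (c₀ - c₁ + c₂ * (a + 1)) * r ^ 2 + -c₂ * (r ^ 2) ^ 2 = 0 := by
    simp only [a]
    linear_combination r * h
  have kev (x y : ℝ) := congrArg (ev x y) key
  simp only [map_add, map_sub, map_neg, map_mul, map_pow, map_one, map_zero, ev_r] at kev
  have k1 := kev (chi (t ^ 2)) (chi (w ^ 2))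
  have k2 := kev (chi (t * w)) (chi (t ^ 3 / w))
  have k3 := kev (chi (t / w)) (chi (t ^ 3 * w))
  rw [ev_congr a2 b2 h₀, ev_congr a2 b2 h₁, ev_congr a2 b2 h₂, a2] at k2
  rw [ev_congr a3 b3 h₀, ev_congr a3 b3 h₁, ev_congr a3 b3 h₂, a3] at k3
  have l0 : 1 < t / w := (one_lt_div hw0).2 hwt
  have l1 : chi (t / w) < chi (t * w) := by
    refine chi_lt l0 ?_
    rw [div_lt_iff₀ hw0]
    nlinarith [mul_pos ht0 hw0]
  have l2 : chi (t * w) < chi (t ^ 2) := chi_lt (by nlinarith) (by nlinarith)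
  have p0 : 0 < chi (t / w) := by unfold chi; positivity
  have m1 : chi (t / w) ^ 2 < chi (t * w) ^ 2 := by gcongr
  have m2 : chi (t * w) ^ 2 < chi (t ^ 2) ^ 2 := by
    have := p0.trans l1
    gcongr
  obtain ⟨e1, e2, e3⟩ := quadratic_zero m2.ne' m1.ne' (m1.trans m2).ne' k1 k2 k3
  have hA : ev (chi (t ^ 2)) (chi (w ^ 2)) a + 1 ≠ 0 := by
    simp only [a, map_add, map_sub, map_mul, map_pow, map_one, ev_r, ev_s, chi, sub_add_cancel]
    positivity
  have z1 := (mul_eq_zero.1 e1).resolve_right hA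
  have z2 := neg_eq_zero.1 e3
  refine ⟨?_, z1, z2⟩
  simpa [z1, z2] using e2

theorem infinite_chi_image {S : Set ℝ} (hS : S.Infinite) (h1 : ∀ t ∈ S, 1 < t) :
    ((fun t : ℝ => chi (t ^ 2)) '' S).Infinite := by
  refine hS.image (StrictMonoOn.injOn ?_)
  intro x hx y hy hxy
  have := h1 x hx
  exact chi_lt (by nlinarith) (by nlinarith)

/-- The values `χ(t²)`, `χ(w²)` with `w ∈ (1,2)`, `t > 2` fill a product of two infinite sets. -/
theorem eq_zero_of_ev {c : P2}
    (h : ∀ t w : ℝ, 1 < w → w < t → ev (chi (t ^ 2)) (chi (w ^ 2)) c = 0) : c = 0 := by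
  apply MvPolynomial.map_injective (Int.castRingHom ℝ) Int.cast_injective
  rw [map_zero]
  refine MvPolynomial.funext_set
    ![(fun t : ℝ => chi (t ^ 2)) '' Set.Ioi 2, (fun t : ℝ => chi (t ^ 2)) '' Set.Ioo 1 2] ?_ ?_
  · intro i
    fin_cases i
    · exact infinite_chi_image (Set.Ioi_infinite 2) fun t (ht : 2 < t) => by linarith
    · exact infinite_chi_image (Set.Ioo_infinite (by norm_num)) fun t ht => ht.1
  · intro x hx
    obtain ⟨t, ht, hxt⟩ := hx 0 (Set.mem_univ _)
    obtain ⟨w, hw, hxw⟩ := hx 1 (Set.mem_univ _)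
    have hxx : x = ![chi (t ^ 2), chi (w ^ 2)] := by
      ext i
      fin_cases i
      · exact hxt.symm
      · exact hxw.symm
    have hz := h t w hw.1 (hw.2.trans ht)
    rw [map_zero, eval_map, hxx, ← hz, ev, aeval_def]
    rfl

theorem coeffs_eq_zero {c₀ c₁ c₂ : P2} (h₀ : c₀ ∈ Zab) (h₁ : c₁ ∈ Zab) (h₂ : c₂ ∈ Zab)
    (h : c₀ * r + c₁ * s + c₂ * (r ^ 2 * s) = 0) : c₀ = 0 ∧ c₁ = 0 ∧ c₂ = 0 :=
  ⟨eq_zero_of_ev fun _ _ hw ht => (ev_eq_zero hw ht h₀ h₁ h₂ h).1,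
    eq_zero_of_ev fun _ _ hw ht => (ev_eq_zero hw ht h₀ h₁ h₂ h).2.1,
    eq_zero_of_ev fun _ _ hw ht => (ev_eq_zero hw ht h₀ h₁ h₂ h).2.2⟩

/-- **`R₁[SO(4)]` is a free `R[G₂]`-module of rank 3** with basis `{r, s, r²s}`: the
basis lies in `O`, and every `f ∈ O` is, in a unique way, a `ℤ[a,b]`-linear combination
`f = c₀·r + c₁·s + c₂·r²s`. -/
theorem oddPart_free_over_Zab :
    (r ∈ oddPart ∧ s ∈ oddPart ∧ r ^ 2 * s ∈ oddPart) ∧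
    ∀ f ∈ oddPart, ∃! c : Fin 3 → P2,
      (∀ i, c i ∈ Zab) ∧ f = c 0 * r + c 1 * s + c 2 * (r ^ 2 * s) := by
  refine ⟨⟨?_, ?_, ?_⟩, fun f hf => ?_⟩
  · exact Submodule.subset_span ⟨1, 0, by decide, by ring⟩
  · exact Submodule.subset_span ⟨0, 1, by decide, by ring⟩
  · exact Submodule.subset_span ⟨2, 1, by decide, by ring⟩
  · obtain ⟨c₀, h₀, c₁, h₁, c₂, h₂, hc⟩ := spanned_of_mem_oddPart hf
    refine ⟨![c₀, c₁, c₂], ⟨?_, by simpa using hc⟩, ?_⟩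
    · intro i
      fin_cases i
      · exact h₀
      · exact h₁
      · exact h₂
    · rintro d ⟨hd, hfd⟩
      obtain ⟨z₀, z₁, z₂⟩ := coeffs_eq_zero (sub_mem (hd 0) h₀) (sub_mem (hd 1) h₁)
        (sub_mem (hd 2) h₂) (by linear_combination hc - hfd)
      ext1 i
      fin_cases i
      · exact sub_eq_zero.1 z₀
      · exact sub_eq_zero.1 z₁
      · exact sub_eq_zero.1 z₂

end
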